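/- Let A and B be C*-algebras, let I be a closed two-sided ideal of A and J a closed two-sided ideal of B, let π : A → A/I and ρ : B → B/J be the quotient maps, and let K be a closed two-sided ideal of A ⊗̂ B containing ker(π ⊗̂ ρ) = A ⊗̂ J + I ⊗̂ B. Then (π ⊗̂ ρ)(K) is a closed two-sided ideal of (A/I) ⊗̂ (B/J) and (π ⊗̂ ρ)⁻¹((π ⊗̂ ρ)(K)) = K. -/

import Mathlib

open scoped TensorProduct
open Pointwise

universe u

noncomputable section

/-- A C⋆-norm on a complex `*`-algebra.  On a matrix algebra over a C⋆-algebra such a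
norm is unique, namely the canonical C⋆-norm. -/
structure IsCStarNorm {M : Type*} [NonUnitalRing M] [StarRing M] [Module ℂ M]
    (N : M → ℝ) : Prop where
  add_le : ∀ x y, N (x + y) ≤ N x + N y
  smul_eq : ∀ (c : ℂ) (x : M), N (c • x) = ‖c‖ * N x
  eq_zero_of : ∀ x, N x = 0 → x = 0
  mul_le : ∀ x y, N (x * y) ≤ N x * N y
  star_mul_self : ∀ x, N (star x * x) = N x * N x

/-- The operator space projective tensor norm `‖·‖_∧` on the algebraic tensor product
`A ⊗ B`, relative to given families of matrix norms on `A` and `B`: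
`‖u‖_∧ = inf { ‖α‖ ‖v‖ ‖w‖ ‖β‖ : u = α (v ⊗ w) β }` where `v ∈ M_p(A)`, `w ∈ M_q(B)`,
`α ∈ M_{1,pq}(ℂ)` and `β ∈ M_{pq,1}(ℂ)` (row and column vectors carrying the Euclidean
norm, which is their norm as scalar matrices). -/
noncomputable def osProjNorm {A B : Type u}
    [AddCommGroup A] [Module ℂ A] [AddCommGroup B] [Module ℂ B]
    (NA : ∀ p : ℕ, Matrix (Fin p) (Fin p) A → ℝ)
    (NB : ∀ q : ℕ, Matrix (Fin q) (Fin q) B → ℝ) (u : A ⊗[ℂ] B) : ℝ :=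
  sInf { r : ℝ | ∃ (p q : ℕ) (α : Fin p × Fin q → ℂ) (v : Matrix (Fin p) (Fin p) A)
      (w : Matrix (Fin q) (Fin q) B) (β : Fin p × Fin q → ℂ),
      u = ∑ ik : Fin p × Fin q, ∑ jl : Fin p × Fin q,
            (α ik * β jl) • (v ik.1 jl.1 ⊗ₜ[ℂ] w ik.2 jl.2) ∧
      r = Real.sqrt (∑ ik, ‖α ik‖ ^ 2) * NA p v * NB q w *
            Real.sqrt (∑ jl, ‖β jl‖ ^ 2) }

/-- `X` is a completion of the algebraic tensor product `A ⊗ B` with respect to the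
norm `ν`, via the (necessarily isometric) dense embedding `ι`, and the multiplication and
involution of `X` are the canonical ones induced from `A` and `B`.  Applied with
`ν = osProjNorm NA NB` (for the canonical matrix C⋆-norms `NA`, `NB`) this characterizes
the Banach `*`-algebra `A ⊗̂ B` (the operator space projective tensor product) up to
isometric `*`-isomorphism; applied with `ν = bsProjNorm` it characterizes the Banach
space projective tensor product `A ⊗_γ B`. -/
structure IsTensorCompletion {A B : Type u} [NonUnitalRing A] [StarRing A] [Module ℂ A]
    [NonUnitalRing B] [StarRing B] [Module ℂ B] (ν : A ⊗[ℂ] B → ℝ)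
    (X : Type u) [NonUnitalNormedRing X] [StarRing X] [NormedSpace ℂ X] [CompleteSpace X]
    (ι : A ⊗[ℂ] B →ₗ[ℂ] X) : Prop where
  norm_eq : ∀ u, ‖ι u‖ = ν u
  dense : DenseRange ι
  mul_tmul : ∀ (a c : A) (b d : B),
    ι (a ⊗ₜ[ℂ] b) * ι (c ⊗ₜ[ℂ] d) = ι ((a * c) ⊗ₜ[ℂ] (b * d))
  star_tmul : ∀ (a : A) (b : B), star (ι (a ⊗ₜ[ℂ] b)) = ι (star a ⊗ₜ[ℂ] star b)

/-- The product ideal `S ⊗̂ T`: the closure in `X` (a completion of `A ⊗ B`) of the span of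
elementary tensors `a ⊗ b` with `a ∈ S`, `b ∈ T`. -/
def tensorIdeal {A B : Type u} [NonUnitalRing A] [StarRing A] [Module ℂ A]
    [NonUnitalRing B] [StarRing B] [Module ℂ B]
    {X : Type u} [NonUnitalNormedRing X] [StarRing X] [NormedSpace ℂ X] [CompleteSpace X]
    (ι : A ⊗[ℂ] B →ₗ[ℂ] X) (S : Set A) (T : Set B) : Set X :=
  closure (ι '' (Submodule.span ℂ (Set.image2 (fun a b => a ⊗ₜ[ℂ] b) S T)))

/-- A closed prime (two-sided) ideal of a Banach algebra: a proper closed two-sided ideal `K`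
such that whenever the product of two closed two-sided ideals is contained in `K`, one of them
is contained in `K`. -/
def IsClosedPrimeIdeal {Y : Type u} [NonUnitalNormedRing Y] (K : TwoSidedIdeal Y) : Prop :=
  IsClosed (K : Set Y) ∧ (K : Set Y) ≠ Set.univ ∧
    ∀ I J : TwoSidedIdeal Y, IsClosed (I : Set Y) → IsClosed (J : Set Y) →
      (∀ x ∈ I, ∀ y ∈ J, x * y ∈ K) → (I : Set Y) ⊆ (K : Set Y) ∨ (J : Set Y) ⊆ (K : Set Y)

/-- An irreducible continuous `*`-representation of a Banach `*`-algebra `Y` on a complex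
Hilbert space. -/
structure IrreducibleRepOn (Y : Type u)
    [NonUnitalNormedRing Y] [StarRing Y] [NormedSpace ℂ Y] where
  H : Type u
  [normH : NormedAddCommGroup H]
  [ipsH : InnerProductSpace ℂ H]
  [csH : CompleteSpace H]
  π : Y →⋆ₙₐ[ℂ] (H →L[ℂ] H)
  continuous : Continuous π
  nonzero : ∃ y, π y ≠ 0
  irreducible : ∀ S : Submodule ℂ H, IsClosed (S : Set H) →
    (∀ y : Y, ∀ v ∈ S, π y v ∈ S) → S = ⊥ ∨ S = ⊤

/-- A primitive ideal: the kernel of an irreducible `*`-representation. -/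
def IsPrimitiveIdeal {Y : Type u} [NonUnitalNormedRing Y] [StarRing Y] [NormedSpace ℂ Y]
    (K : TwoSidedIdeal Y) : Prop :=
  ∃ ρ : IrreducibleRepOn Y, ∀ y, y ∈ K ↔ ρ.π y = 0

/-- A subset `K` of a ring is modular (as an ideal) if there is a relative unit `e`
with `x * e - x ∈ K` and `e * x - x ∈ K` for every `x`. -/
def IsModularIdealSet {Y : Type u} [NonUnitalRing Y] (K : Set Y) : Prop :=
  ∃ e : Y, ∀ x : Y, x * e - x ∈ K ∧ e * x - x ∈ K

/-- A maximal modular (two-sided) ideal: a modular ideal which is proper and maximal among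
proper two-sided ideals. -/
def IsMaximalModularIdeal {Y : Type u} [NonUnitalRing Y] (K : TwoSidedIdeal Y) : Prop :=
  IsModularIdealSet (K : Set Y) ∧ (K : Set Y) ≠ Set.univ ∧
    ∀ L : TwoSidedIdeal Y, (K : Set Y) ⊆ (L : Set Y) →
      (L : Set Y) = (K : Set Y) ∨ (L : Set Y) = Set.univ

/-- The operator norm of a `p × p` matrix of bounded operators on a Hilbert space `H`,
viewed as an operator on the `ℓ²`-direct sum `H ⊕ ⋯ ⊕ H`. -/
noncomputable def opMatrixNorm {H : Type u} [NormedAddCommGroup H] [InnerProductSpace ℂ H]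
    {p : ℕ} (T : Matrix (Fin p) (Fin p) (H →L[ℂ] H)) : ℝ :=
  sSup { r : ℝ | ∃ x : Fin p → H, (∑ i, ‖x i‖ ^ 2) ≤ 1 ∧
      r = Real.sqrt (∑ i, ‖∑ j, (T i j) (x j)‖ ^ 2) }

/-- An operator algebra structure on a Banach algebra `Y`: a bicontinuous algebra
homomorphism of `Y` into the bounded operators on some Hilbert space. -/
structure OperatorAlgebraEmbedding (Y : Type u) [NonUnitalNormedRing Y] [NormedSpace ℂ Y] where
  H : Type u
  [normH : NormedAddCommGroup H]
  [ipsH : InnerProductSpace ℂ H]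
  [csH : CompleteSpace H]
  ρ : Y →ₙₐ[ℂ] (H →L[ℂ] H)
  c : ℝ
  C : ℝ
  c_pos : 0 < c
  lower : ∀ y, c * ‖y‖ ≤ ‖ρ y‖
  upper : ∀ y, ‖ρ y‖ ≤ C * ‖y‖

/-- The matrix norms on `Y` induced by an operator algebra embedding, giving `Y` its
operator space structure: the norm of `v ∈ M_p(Y)` is the operator norm of the matrix
of operators obtained by applying the embedding entrywise. -/
noncomputable def OperatorAlgebraEmbedding.matrixNorm {Y : Type u}
    [NonUnitalNormedRing Y] [NormedSpace ℂ Y] (e : OperatorAlgebraEmbedding Y)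
    (p : ℕ) (v : Matrix (Fin p) (Fin p) Y) : ℝ :=
  letI := e.normH; letI := e.ipsH
  opMatrixNorm (v.map e.ρ)

/-- The Banach space projective tensor norm `‖·‖_γ` on the algebraic tensor product. -/
noncomputable def bsProjNorm {A B : Type u} [NonUnitalNormedRing A] [NormedSpace ℂ A]
    [NonUnitalNormedRing B] [NormedSpace ℂ B] (u : A ⊗[ℂ] B) : ℝ :=
  sInf { r : ℝ | ∃ (n : ℕ) (a : Fin n → A) (b : Fin n → B),
      u = ∑ i, a i ⊗ₜ[ℂ] b i ∧ r = ∑ i, ‖a i‖ * ‖b i‖ }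

/-- A C⋆-algebra `A` is subhomogeneous if there is `n : ℕ` bounding the (finite)
dimensions of all its irreducible `*`-representations. -/
def IsSubhomogeneous (A : Type u) [NonUnitalCStarAlgebra A] : Prop :=
  ∃ n : ℕ, ∀ ρ : IrreducibleRepOn A,
    letI := ρ.normH
    letI := ρ.ipsH
    FiniteDimensional ℂ ρ.H ∧ Module.finrank ℂ ρ.H ≤ n



lemma IsCStarNorm.nonneg' {M : Type*} [NonUnitalRing M] [StarRing M] [Module ℂ M]
    {N : M → ℝ} (hN : IsCStarNorm N) (x : M) : 0 ≤ N x := by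
  have h0 : N 0 = 0 := by simpa using hN.smul_eq 0 0
  have h1 : N (-x) = N x := by simpa using hN.smul_eq (-1) x
  have h2 := hN.add_le x (-x)
  rw [add_neg_cancel, h0, h1] at h2
  linarith

section uniq
variable {M : Type*} [NonUnitalCStarAlgebra M]

lemma IsCStarNorm.aux_contr {N : M → ℝ} (hN : IsCStarNorm N) {x : M} (hx : IsSelfAdjoint x)
    (h1 : ‖x‖ ≤ 1) (y : M) : N (x * y) ≤ N y := by
  set f : ℝ → ℝ := fun s => 1 - Real.sqrt (1 - s * s) with hf
  have hfc : Continuous f := by fun_prop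
  have hf0 : f 0 = 0 := by simp [hf]
  set t := cfcₙ f x with ht
  have hts : star t = t := (cfcₙ_predicate f x : IsSelfAdjoint t).star_eq
  have hxs : star x = x := hx.star_eq
  have hid : cfcₙ (fun s : ℝ => s) x = x := cfcₙ_id' ℝ x
  have hcomm : x * t = t * x := by
    have e1 : x * t = cfcₙ (fun s => s * f s) x := by
      rw [cfcₙ_mul (fun s => s) f x (by fun_prop) rfl hfc.continuousOn hf0, hid]
    have e2 : t * x = cfcₙ (fun s => f s * s) x := by
      rw [cfcₙ_mul f (fun s => s) x hfc.continuousOn hf0 (by fun_prop) rfl, hid]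
    rw [e1, e2]; congr 1; ext s; ring
  have hsp : ∀ s ∈ quasispectrum ℝ x, ‖s‖ ≤ 1 := fun s hs => by
    have := norm_apply_le_norm_cfcₙ (fun s : ℝ => s) x hs
    rw [hid] at this
    exact this.trans h1
  have hrel : x * x = t + t - t * t := by
    have e1 : x * x = cfcₙ (fun s : ℝ => s * s) x := by
      rw [cfcₙ_mul (fun s => s) (fun s => s) x (by fun_prop) rfl (by fun_prop) rfl, hid]
    have e2 : t + t - t * t = cfcₙ (fun s : ℝ => f s + f s - f s * f s) x := by
      rw [cfcₙ_sub (fun s => f s + f s) (fun s => f s * f s) x (by fun_prop) (by simp [hf0])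
        (by fun_prop) (by simp [hf0]),
        cfcₙ_add f f x (by fun_prop) hf0 (by fun_prop) hf0,
        cfcₙ_mul f f x (by fun_prop) hf0 (by fun_prop) hf0]
    rw [e1, e2]
    apply cfcₙ_congr
    intro s hs
    have h := hsp s hs
    rw [Real.norm_eq_abs] at h
    have h' : 0 ≤ 1 - s * s := by nlinarith [abs_nonneg s, abs_mul_abs_self s]
    have := Real.mul_self_sqrt h'
    simp only [hf]
    nlinarith
  have key : ∀ c : ℂ, c * c = -1 → star c = -c → N (x * y + c • (y - t * y)) = N y := by
    intro c hc hcs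
    have e : star (x * y + c • (y - t * y)) * (x * y + c • (y - t * y)) = star y * y := by
      have e1 : star (x * y + c • (y - t * y))
          = star y * x - c • (star y - star y * t) := by
        simp only [star_add, star_mul, star_smul, star_sub, hxs, hts, hcs, neg_smul]
        abel
      rw [e1]
      have e2 : (star y * x - c • (star y - star y * t)) * (x * y + c • (y - t * y))
          = star y * (x * x) * y + c • (star y * (t * x - x * t) * y)
            - (c * c) • (star y * (y - t * y - t * y + t * t * y)) := by
        simp only [mul_sub, sub_mul, mul_add, smul_mul_assoc, mul_smul_comm, smul_sub,
          smul_add, smul_smul, mul_assoc]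
        abel
      rw [e2, hc, hcomm, hrel]
      simp only [mul_sub, sub_mul, mul_add, add_mul, mul_assoc, sub_self, smul_zero, zero_mul, mul_zero,
        neg_smul,
        one_smul]
      abel
    have h3 := hN.star_mul_self (x * y + c • (y - t * y))
    rw [e, hN.star_mul_self] at h3
    exact (mul_self_inj (hN.nonneg' _) (hN.nonneg' _)).1 h3.symm
  have k1 := key Complex.I (by simp) (by simp)
  have k2 := key (-Complex.I) (by simp) (by simp)
  have h4 := hN.add_le (x * y + Complex.I • (y - t * y)) (x * y + (-Complex.I) • (y - t * y))
  have e : x * y + Complex.I • (y - t * y) + (x * y + (-Complex.I) • (y - t * y))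
      = (2 : ℂ) • (x * y) := by
    rw [neg_smul, two_smul]; abel
  rw [e, hN.smul_eq, k1, k2] at h4
  simp at h4
  linarith

lemma IsCStarNorm.le_one {N : M → ℝ} (hN : IsCStarNorm N) {x : M} (hx : IsSelfAdjoint x)
    (h1 : ‖x‖ ≤ 1) : N x ≤ 1 := by
  have h := hN.aux_contr hx h1 x
  have h2 := hN.star_mul_self x
  rw [hx.star_eq] at h2
  rw [h2] at h
  by_contra hc
  push Not at hc
  nlinarith

lemma IsCStarNorm.le_norm_sa {N : M → ℝ} (hN : IsCStarNorm N) {x : M} (hx : IsSelfAdjoint x) :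
    N x ≤ ‖x‖ := by
  by_cases h0 : x = 0
  · subst h0
    have : N 0 = 0 := by simpa using hN.smul_eq 0 0
    simp [this]
  have hp : 0 < ‖x‖ := norm_pos_iff.2 h0
  set c : ℂ := ((‖x‖⁻¹ : ℝ) : ℂ) with hc
  have hcn : ‖c‖ = ‖x‖⁻¹ := by
    rw [hc, Complex.norm_real, Real.norm_eq_abs, abs_of_pos (inv_pos.2 hp)]
  have hsa : IsSelfAdjoint (c • x) := by
    rw [IsSelfAdjoint, star_smul, hx.star_eq, hc]
    simp
  have h := hN.le_one hsa (by rw [norm_smul, hcn, inv_mul_cancel₀ hp.ne'])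
  rw [hN.smul_eq, hcn] at h
  rw [inv_mul_le_iff₀ hp] at h
  linarith

lemma IsCStarNorm.le_norm {N : M → ℝ} (hN : IsCStarNorm N) (x : M) : N x ≤ ‖x‖ := by
  have h := hN.le_norm_sa (IsSelfAdjoint.star_mul_self x)
  rw [hN.star_mul_self, CStarRing.norm_star_mul_self] at h
  exact abs_le_of_sq_le_sq' (by nlinarith) (norm_nonneg _) |>.2

lemma quasi_nonneg (x : M) : ∀ s ∈ quasispectrum ℝ (star x * x), 0 ≤ s := by
  letI := CStarAlgebra.spectralOrder M
  haveI := CStarAlgebra.spectralOrderedRing M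
  exact quasispectrum_nonneg_of_nonneg _ (star_mul_self_nonneg x)

lemma IsCStarNorm.norm_le_pos {N : M → ℝ} (hN : IsCStarNorm N) (x : M) :
    ‖star x * x‖ ≤ N (star x * x) := by
  have hq := quasi_nonneg x
  have hsa := IsSelfAdjoint.star_mul_self x
  set a := star x * x with ha
  apply le_of_forall_gt_imp_ge_of_dense
  intro c hc
  have hc0 : 0 < c := (hN.nonneg' a).trans_lt hc
  have hid : cfcₙ (fun s : ℝ => s) a = a := cfcₙ_id' ℝ a
  set f : ℝ → ℝ := fun s => max 0 (s - c) with hf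
  set k : ℝ → ℝ := fun s => s / (max s c) ^ 2 with hk
  have hfc : Continuous f := by fun_prop
  have hkc : Continuous k := by
    apply Continuous.div continuous_id (by fun_prop)
    intro s
    have : 0 < max s c := lt_max_of_lt_right hc0
    positivity
  have hf0 : f 0 = 0 := by simp [hf, hc0.le]
  have hk0 : k 0 = 0 := by simp [hk]
  have e : cfcₙ f a = cfcₙ k a * (a * cfcₙ f a) := by
    have : cfcₙ k a * (a * cfcₙ f a) = cfcₙ (fun s => k s * (s * f s)) a := by
      rw [cfcₙ_mul k (fun s => s * f s) a (by fun_prop) hk0 (by fun_prop) (by simp),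
        cfcₙ_mul (fun s => s) f a (by fun_prop) rfl (by fun_prop) hf0, hid]
    rw [this]
    congr 1
    ext s
    simp only [hf, hk]
    rcases le_total s c with h | h
    · rw [max_eq_left (by linarith : s - c ≤ 0)]; simp
    · rw [max_eq_left h]
      have : s ≠ 0 := by linarith
      field_simp
  have hkn : N (cfcₙ k a) ≤ c⁻¹ := by
    refine (hN.le_norm _).trans (norm_cfcₙ_le fun s hs => ?_)
    have hs0 := hq s hs
    have hm : 0 < max s c := lt_max_of_lt_right hc0
    rw [Real.norm_eq_abs, abs_of_nonneg (by positivity)]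
    simp only [hk]
    rw [div_le_iff₀ (by positivity), ← div_eq_inv_mul, le_div_iff₀ hc0, sq]
    exact mul_le_mul (le_max_left _ _) (le_max_right _ _) hc0.le hm.le
  have hy : cfcₙ f a = 0 := by
    apply hN.eq_zero_of
    have n0 := hN.nonneg' (cfcₙ f a)
    have h1 : N (cfcₙ f a) ≤ c⁻¹ * (N a * N (cfcₙ f a)) := by
      conv_lhs => rw [e]
      refine (hN.mul_le _ _).trans ?_
      exact mul_le_mul hkn (hN.mul_le _ _) (hN.nonneg' _) (by positivity)
    rw [← div_eq_inv_mul, le_div_iff₀ hc0] at h1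
    nlinarith
  have h5 : a = cfcₙ (fun s => s - f s) a := by
    rw [cfcₙ_sub (fun s => s) f a (by fun_prop) rfl (by fun_prop) hf0, hid, hy, sub_zero]
  rw [h5]
  refine norm_cfcₙ_le fun s hs => ?_
  have hs0 := hq s hs
  simp only [hf]
  rw [Real.norm_eq_abs, abs_le]
  constructor <;> rcases le_total 0 (s - c) with h | h <;> simp [h] <;> linarith

lemma IsCStarNorm.eq_norm {N : M → ℝ} (hN : IsCStarNorm N) (x : M) : N x = ‖x‖ := by
  apply le_antisymm (hN.le_norm x)
  have h := hN.norm_le_pos x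
  rw [hN.star_mul_self, CStarRing.norm_star_mul_self] at h
  exact abs_le_of_sq_le_sq' (by nlinarith) (hN.nonneg' _) |>.2

lemma lift_norm {M' : Type*} [NonUnitalCStarAlgebra M'] (φ : M →⋆ₙₐ[ℂ] M') (v : M) :
    ∃ w : M, φ w = φ v ∧ ‖w‖ ≤ ‖φ v‖ := by
  by_cases h0 : φ v = 0
  · exact ⟨0, by simp [h0], by simp⟩
  have hR : 0 < ‖φ v‖ := norm_pos_iff.2 h0
  set R := ‖φ v‖ with hRd
  have hq := quasi_nonneg v
  have hq' := quasi_nonneg (φ v)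
  have hsa := IsSelfAdjoint.star_mul_self v
  have hsa' := IsSelfAdjoint.star_mul_self (φ v)
  have ha' : φ (star v * v) = star (φ v) * φ v := by simp [map_star]
  have hn' : ‖star (φ v) * φ v‖ = R * R := CStarRing.norm_star_mul_self
  set a := star v * v with ha
  set a' := star (φ v) * φ v
  have hid : cfcₙ (fun s : ℝ => s) a = a := cfcₙ_id' ℝ a
  have hid' : cfcₙ (fun s : ℝ => s) a' = a' := cfcₙ_id' ℝ a'
  set h : ℝ → ℝ := fun s => 1 - R / max R (Real.sqrt s) with hh
  have hhc : Continuous h := by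
    apply Continuous.sub continuous_const
    apply Continuous.div continuous_const (by fun_prop)
    intro s
    have : 0 < max R (Real.sqrt s) := lt_max_of_lt_left hR
    positivity
  have hh0 : h 0 = 0 := by simp [hh, hR.le, hR.ne']
  set k := cfcₙ h a with hk
  have hks : star k = k := (cfcₙ_predicate h a : IsSelfAdjoint k).star_eq
  have hφk : φ k = 0 := by
    have hφc : Continuous φ := 
      AddMonoidHomClass.continuous_of_bound φ 1
        (fun x => by simpa using NonUnitalStarAlgHom.norm_apply_le φ x)
    rw [hk, NonUnitalStarAlgHom.map_cfcₙ φ h a hhc.continuousOn hh0 hφc hsa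
      (by rw [ha']; exact hsa'), ha']
    rw [← cfcₙ_zero ℝ a']
    apply cfcₙ_congr
    intro s hs
    have h1 := norm_apply_le_norm_cfcₙ (fun s : ℝ => s) a' hs
    rw [hid', hn', Real.norm_eq_abs] at h1
    have h2 : Real.sqrt s ≤ R := by
      rw [Real.sqrt_le_left hR.le]
      nlinarith [le_abs_self s]
    simp [hh, h2, hR.ne']
  refine ⟨v - v * k, by simp [hφk], ?_⟩
  have e : star (v - v * k) * (v - v * k)
      = cfcₙ (fun s => s - s * h s - (h s * s - h s * (s * h s))) a := by
    rw [cfcₙ_sub (fun s => s - s * h s) (fun s => h s * s - h s * (s * h s)) a (by fun_prop)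
        (by simp) (by fun_prop) (by simp),
      cfcₙ_sub (fun s => s) (fun s => s * h s) a (by fun_prop)
        (by simp) (by fun_prop) (by simp),
      cfcₙ_sub (fun s => h s * s) (fun s => h s * (s * h s)) a (by fun_prop)
        (by simp) (by fun_prop) (by simp),
      cfcₙ_mul h (fun s => s * h s) a (by fun_prop) hh0 (by fun_prop) (by simp),
      cfcₙ_mul h (fun s => s) a (by fun_prop) hh0 (by fun_prop) (by simp),
      cfcₙ_mul (fun s => s) h a (by fun_prop) (by simp) (by fun_prop) hh0, hid, ← hk, ha]
    simp only [star_sub, star_mul, hks, mul_sub, sub_mul, mul_assoc]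
    abel
  have hb : ‖star (v - v * k) * (v - v * k)‖ ≤ R * R := by
    rw [e]
    refine norm_cfcₙ_le fun s hs => ?_
    have hs0 := hq s hs
    have hm : 0 < max R (Real.sqrt s) := lt_max_of_lt_left hR
    have e2 : s - s * h s - (h s * s - h s * (s * h s))
        = s * (R / max R (Real.sqrt s)) ^ 2 := by
      simp only [hh]; ring
    rw [e2, Real.norm_eq_abs, abs_of_nonneg (by positivity), div_pow, ← mul_div_assoc,
      div_le_iff₀ (by positivity)]
    have h3 : s ≤ (max R (Real.sqrt s)) ^ 2 := by
      calc s = (Real.sqrt s) ^ 2 := (Real.sq_sqrt hs0).symm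
        _ ≤ _ := by gcongr; exact le_max_right _ _
    nlinarith [mul_le_mul_of_nonneg_left h3 (mul_self_nonneg R)]
  rw [CStarRing.norm_star_mul_self] at hb
  exact abs_le_of_sq_le_sq' (by nlinarith) hR.le |>.2

end uniq

lemma matrix_lift {A A' : Type*} [NonUnitalCStarAlgebra A] [NonUnitalCStarAlgebra A'] {p : ℕ}
    {N : Matrix (Fin p) (Fin p) A → ℝ} {N' : Matrix (Fin p) (Fin p) A' → ℝ}
    (hN : IsCStarNorm N) (hN' : IsCStarNorm N') (π : A →⋆ₙₐ[ℂ] A')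
    (hπ : Function.Surjective π) (v' : Matrix (Fin p) (Fin p) A') :
    ∃ v : Matrix (Fin p) (Fin p) A, (∀ i j, π (v i j) = v' i j) ∧ N v ≤ N' v' := by
  letI := CStarAlgebra.spectralOrder A
  haveI := CStarAlgebra.spectralOrderedRing A
  letI := CStarAlgebra.spectralOrder A'
  haveI := CStarAlgebra.spectralOrderedRing A'
  have h1 : IsCStarNorm (M := CStarMatrix (Fin p) (Fin p) A) N :=
    ⟨hN.add_le, hN.smul_eq, hN.eq_zero_of, hN.mul_le, hN.star_mul_self⟩
  have h2 : IsCStarNorm (M := CStarMatrix (Fin p) (Fin p) A') N' :=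
    ⟨hN'.add_le, hN'.smul_eq, hN'.eq_zero_of, hN'.mul_le, hN'.star_mul_self⟩
  choose σ hσ using hπ
  let φ : CStarMatrix (Fin p) (Fin p) A →⋆ₙₐ[ℂ] CStarMatrix (Fin p) (Fin p) A' :=
    CStarMatrix.mapₙₐ π
  let v0 : CStarMatrix (Fin p) (Fin p) A := CStarMatrix.ofMatrix (fun i j => σ (v' i j))
  have hv0 : φ v0 = CStarMatrix.ofMatrix v' := by
    ext i j
    exact hσ _
  obtain ⟨w, hw, hwn⟩ := lift_norm φ v0
  rw [hv0] at hw hwn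
  refine ⟨CStarMatrix.ofMatrix.symm w, fun i j => ?_, ?_⟩
  · exact congrFun (congrFun hw i) j
  · exact (h1.eq_norm w).trans_le (hwn.trans_eq (h2.eq_norm _).symm)

/-- In the setting of quotient maps `π : A → A/I`, `ρ : B → B/J` (realized
by surjective `*`-homomorphisms onto `A'`, `B'`) and the induced map
`θ = π ⊗̂ ρ : A ⊗̂ B → (A/I) ⊗̂ (B/J)`: for every closed two-sided ideal `K` of `A ⊗̂ B`
containing `ker θ`, the image `θ(K)` is a closed two-sided ideal of `(A/I) ⊗̂ (B/J)`
and `θ⁻¹(θ(K)) = K`. -/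
theorem image_of_ideal_under_quotient_tensor_map {A B A' B' X X' : Type u}
    [NonUnitalCStarAlgebra A] [NonUnitalCStarAlgebra B]
    [NonUnitalCStarAlgebra A'] [NonUnitalCStarAlgebra B']
    [NonUnitalNormedRing X] [StarRing X] [NormedSpace ℂ X] [CompleteSpace X]
    [NonUnitalNormedRing X'] [StarRing X'] [NormedSpace ℂ X'] [CompleteSpace X']
    (NA : ∀ p : ℕ, Matrix (Fin p) (Fin p) A → ℝ)
    (NB : ∀ q : ℕ, Matrix (Fin q) (Fin q) B → ℝ)
    (NA' : ∀ p : ℕ, Matrix (Fin p) (Fin p) A' → ℝ)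
    (NB' : ∀ q : ℕ, Matrix (Fin q) (Fin q) B' → ℝ)
    (hNA : ∀ p, IsCStarNorm (NA p)) (hNB : ∀ q, IsCStarNorm (NB q))
    (hNA' : ∀ p, IsCStarNorm (NA' p)) (hNB' : ∀ q, IsCStarNorm (NB' q))
    (ι : A ⊗[ℂ] B →ₗ[ℂ] X) (hX : IsTensorCompletion (osProjNorm NA NB) X ι)
    (ι' : A' ⊗[ℂ] B' →ₗ[ℂ] X') (hX' : IsTensorCompletion (osProjNorm NA' NB') X' ι')
    (I : TwoSidedIdeal A) (J : TwoSidedIdeal B)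
    (hI : IsClosed (I : Set A)) (hJ : IsClosed (J : Set B))
    (π : A →⋆ₙₐ[ℂ] A') (ρ : B →⋆ₙₐ[ℂ] B')
    (hπ : Function.Surjective π) (hρ : Function.Surjective ρ)
    (hkerπ : ∀ a, π a = 0 ↔ a ∈ I) (hkerρ : ∀ b, ρ b = 0 ↔ b ∈ J)
    (θ : X →L[ℂ] X')
    (hθ : ∀ (a : A) (b : B), θ (ι (a ⊗ₜ[ℂ] b)) = ι' (π a ⊗ₜ[ℂ] ρ b))
    (K : TwoSidedIdeal X) (hK : IsClosed (K : Set X))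
    (hker : ∀ x : X, θ x = 0 → x ∈ K) :
    (∃ L : TwoSidedIdeal X', (L : Set X') = θ '' (K : Set X)) ∧
    IsClosed (θ '' (K : Set X)) ∧
    θ ⁻¹' (θ '' (K : Set X)) = (K : Set X) := by
  have hNA0 : ∀ p v, 0 ≤ NA p v := fun p v => (hNA p).nonneg' v
  have hNB0 : ∀ p v, 0 ≤ NB p v := fun p v => (hNB p).nonneg' v
  have hNA0' : ∀ p v, 0 ≤ NA' p v := fun p v => (hNA' p).nonneg' v
  have hNB0' : ∀ p v, 0 ≤ NB' p v := fun p v => (hNB' p).nonneg' v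
  -- lifting elements of the algebraic tensor product with norm control
  have hlift : ∀ u' : A' ⊗[ℂ] B', ∃ x : X, θ x = ι' u' ∧ ‖x‖ ≤ 2 * ‖ι' u'‖ := by
    intro u'
    by_cases h0 : ι' u' = 0
    · exact ⟨0, by simp [h0], by simp⟩
    have hpos : 0 < ‖ι' u'‖ := norm_pos_iff.2 h0
    have hν := hX'.norm_eq u'
    have hlt : osProjNorm NA' NB' u' < 2 * ‖ι' u'‖ := by rw [← hν]; linarith
    have hne : osProjNorm NA' NB' u' ≠ 0 := by rw [← hν]; exact hpos.ne'
    obtain ⟨r, ⟨p, q, α, v', w', β, hu', hr⟩, hr2⟩ :=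
      exists_lt_of_csInf_lt (by
        by_contra hemp
        rw [Set.not_nonempty_iff_eq_empty] at hemp
        apply hne
        unfold osProjNorm
        rw [hemp, Real.sInf_empty]) hlt
    obtain ⟨v, hv, hvn⟩ := matrix_lift (hNA p) (hNA' p) π hπ v'
    obtain ⟨w, hw, hwn⟩ := matrix_lift (hNB q) (hNB' q) ρ hρ w'
    refine ⟨ι (∑ ik : Fin p × Fin q, ∑ jl : Fin p × Fin q,
            (α ik * β jl) • (v ik.1 jl.1 ⊗ₜ[ℂ] w ik.2 jl.2)), ?_, ?_⟩
    · rw [hu']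
      simp only [map_sum, map_smul, hθ, hv, hw]
    · rw [hX.norm_eq]
      have hle : osProjNorm NA NB (∑ ik : Fin p × Fin q, ∑ jl : Fin p × Fin q,
            (α ik * β jl) • (v ik.1 jl.1 ⊗ₜ[ℂ] w ik.2 jl.2)) ≤
          Real.sqrt (∑ ik, ‖α ik‖ ^ 2) * NA p v * NB q w *
            Real.sqrt (∑ jl, ‖β jl‖ ^ 2) := by
        apply csInf_le
        · refine ⟨0, ?_⟩
          rintro _ ⟨p, q, α, v, w, β, -, rfl⟩
          have := hNA0 p v
          have := hNB0 q w
          positivity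
        · exact ⟨p, q, α, v, w, β, rfl, rfl⟩
      refine hle.trans (le_trans ?_ hr2.le)
      rw [hr]
      have := hNA0' p v'
      have := hNB0' q w'
      have := hNA0 p v
      have := hNB0 q w
      gcongr
  have hsurj : Function.Surjective θ := by
    let f : NormedAddGroupHom X X' :=
      { toFun := θ, map_add' := map_add θ, bound' := ⟨‖θ‖, θ.le_opNorm⟩ }
    have hyp : f.SurjectiveOnWith (LinearMap.range ι').toAddSubgroup 2 := by
      rintro _ ⟨u', rfl⟩
      exact hlift u'
    have h2 := controlled_closure_of_complete (by norm_num) (by norm_num : (0:ℝ) < 1) hyp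
    intro x'
    obtain ⟨x, hx, -⟩ := h2 x' (hX'.dense x')
    exact ⟨x, hx⟩
  have hmul : ∀ x y, θ (x * y) = θ x * θ y := by
    have hpure : ∀ s t : A ⊗[ℂ] B, θ (ι s * ι t) = θ (ι s) * θ (ι t) := by
      intro s t
      induction s using TensorProduct.induction_on with
      | zero => simp
      | add s₁ s₂ h₁ h₂ => simp only [map_add, add_mul, h₁, h₂]
      | tmul a b =>
        induction t using TensorProduct.induction_on with
        | zero => simp
        | add s₁ s₂ h₁ h₂ => simp only [map_add, mul_add, h₁, h₂]
        | tmul c d => simp only [hX.mul_tmul, hθ, hX'.mul_tmul, map_mul]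
    intro x y
    exact hX.dense.induction_on₂
      (isClosed_eq (θ.continuous.comp continuous_mul)
        ((θ.continuous.comp continuous_fst).mul (θ.continuous.comp continuous_snd))) hpure x y
  have hpre : θ ⁻¹' (θ '' (K : Set X)) = (K : Set X) := by
    apply Set.Subset.antisymm _ (Set.subset_preimage_image _ _)
    rintro x ⟨k, hk, hkx⟩
    have h1 : x - k ∈ K := hker _ (by rw [map_sub, hkx, sub_self])
    have h2 := K.add_mem h1 hk
    rwa [sub_add_cancel] at h2
  refine ⟨⟨TwoSidedIdeal.mk' (θ '' (K : Set X)) ⟨0, K.zero_mem, map_zero θ⟩ ?_ ?_ ?_ ?_,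
    TwoSidedIdeal.coe_mk' _ _ _ _ _ _⟩, ?_, hpre⟩
  · rintro _ _ ⟨x, hx, rfl⟩ ⟨y, hy, rfl⟩
    exact ⟨x + y, K.add_mem hx hy, map_add θ x y⟩
  · rintro _ ⟨x, hx, rfl⟩
    exact ⟨-x, K.neg_mem hx, map_neg θ x⟩
  · rintro x' _ ⟨y, hy, rfl⟩
    obtain ⟨x, rfl⟩ := hsurj x'
    exact ⟨x * y, K.mul_mem_left _ _ hy, hmul x y⟩
  · rintro _ y' ⟨x, hx, rfl⟩
    obtain ⟨y, rfl⟩ := hsurj y'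
    exact ⟨x * y, K.mul_mem_right _ _ hx, hmul x y⟩
  · rw [← (θ.isQuotientMap hsurj).isClosed_preimage, hpre]
    exact hK


end
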